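/- arXiv:1102.4353 — 2 statements merged into one kernel-verified Lean document; each statement's English description precedes it below -/
import Mathlib

section
/- Let G be a finite group and γ ≥ 1. The number of tuples (t_1,...,t_{2γ}) ∈ G^{2γ} with [t_1,t_2][t_3,t_4]⋯[t_{2γ−1},t_{2γ}] = 1 equals |G|^{2γ−1} · ∑_{ρ ∈ Irr(G)} (dim ρ)^{2−2γ}. -/
/-!
In the group algebra `k[G]` let `C` be the sum of all commutators `⁅a, b⁆`. The number of tuples
whose product of commutators is `x` is the coefficient of `x` in `C ^ γ`. By Schur's lemma, summing
first over `a` and then over `b`, the element `C` acts on a simple representation `V` as the scalar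
`(|G| / dim V) ^ 2`. As `k[G]` is semisimple, an element is determined by its action on the simple
representations, so `C ^ γ = ∑ (|G| / dim V) ^ (2 * γ) • e_V`, where `e_V` is the central idempotent
`(dim V / |G|) ∑ χ_V(g⁻¹) g`. Comparing the coefficients of `x` gives Frobenius' formula, of which
the theorem is the case `x = 1`.
-/

open CategoryTheory Module Representation
open scoped MonoidAlgebra commutatorElement

universe u v

section PowerOfSum

theorem sum_pow_eq_sum_prod_ofFn {α A : Type*} [Fintype α] [Semiring A] (f : α → A) (n : ℕ) :
    (∑ a, f a) ^ n = ∑ t : Fin n → α, (List.ofFn fun j => f (t j)).prod := by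
  simpa [List.ofFn_const] using (MultilinearMap.mkPiAlgebraFin ℕ n A).map_sum fun _ => f

theorem coeff_sum_single_pow {R G α : Type*} [Semiring R] [Monoid G] [Fintype α]
    (c : α → G) (n : ℕ) (x : G) :
    ((∑ a, MonoidAlgebra.single (c a) (1 : R)) ^ n).coeff x =
      Nat.card {t : Fin n → α // (List.ofFn fun j => c (t j)).prod = x} := by
  classical
  have single_prod (t : Fin n → α) :
      (List.ofFn fun j => MonoidAlgebra.single (c (t j)) (1 : R)).prod =
        MonoidAlgebra.single (List.ofFn fun j => c (t j)).prod 1 := by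
    simpa [List.map_ofFn, Function.comp_def] using
      (map_list_prod (MonoidAlgebra.of R G) (List.ofFn fun j => c (t j))).symm
  rw [sum_pow_eq_sum_prod_ofFn, MonoidAlgebra.coeff_sum, Finsupp.finsetSum_apply]
  simp only [single_prod, MonoidAlgebra.coeff_single, Finsupp.single_apply, Finset.sum_boole]
  rw [Nat.card_eq_fintype_card, Fintype.card_subtype]

end PowerOfSum

section GroupAlgebra

theorem eq_zero_of_forall_isSimpleModule_quotient_smul_eq_zero {R : Type*} [Ring R]
    [IsSemisimpleRing R] (z : R)
    (h : ∀ I : Ideal R, IsSimpleModule R (R ⧸ I) → ∀ x : R ⧸ I, z • x = 0) : z = 0 := by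
  have mem_jacobson : z ∈ Ring.jacobson R := by
    rw [Ring.jacobson, Module.jacobson, Submodule.mem_sInf]
    intro I hI
    have hz := h I (isSimpleModule_iff_isCoatom.mpr hI) (Submodule.Quotient.mk 1)
    rwa [← Submodule.Quotient.mk_smul, smul_eq_mul, mul_one, Submodule.Quotient.mk_eq_zero] at hz
  rwa [IsSemisimpleRing.jacobson_eq_bot, Submodule.mem_bot] at mem_jacobson

theorem asAlgebraHom_ofModule' {R : Type*} [CommSemiring R] {G : Type*} [Monoid G] (M : Type*)
    [AddCommMonoid M] [Module R M] [Module R[G] M] [IsScalarTower R R[G] M] (z : R[G]) (x : M) :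
    asAlgebraHom (ofModule' (k := R) (G := G) M) z x = z • x :=
  congr($((MonoidAlgebra.lift R (End R M) G).apply_symm_apply (Algebra.lsmul R R M)) z x)

theorem asAlgebraHom_eq_conj_of_iso {R : Type u} [CommRing R] {G : Type v} [Monoid G]
    {V W : FDRep R G} (e : V ≅ W) (z : R[G]) :
    asAlgebraHom W.ρ z = (FDRep.isoToLinearEquiv e).conj (asAlgebraHom V.ρ z) := by
  have algHom_eq : asAlgebraHom W.ρ =
      ((FDRep.isoToLinearEquiv e).conjAlgEquiv R).toAlgHom.comp (asAlgebraHom V.ρ) :=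
    MonoidAlgebra.algHom_ext
      (fun g => by simp [FDRep.Iso.conj_ρ e, LinearEquiv.conjAlgEquiv_apply,
        LinearEquiv.conj_apply, LinearMap.comp_assoc])
      (Subsingleton.elim _ _)
  exact congr($algHom_eq z)

variable {k : Type u} [Field k] {G : Type v} [Group G]

theorem simple_of_isSimpleModule_asModule (V : FDRep k G) [IsSimpleModule k[G] (asModule V.ρ)] :
    Simple V := by
  have : Simple ((forget₂ (FDRep k G) (Rep k G) ⋙ Rep.toModuleMonoidAlgebra).obj V) :=
    simple_iff_isSimpleModule.mpr ‹_›
  exact Functor.simple_of_simple_obj (forget₂ (FDRep k G) (Rep k G) ⋙ Rep.toModuleMonoidAlgebra) V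

theorem simple_of_ofModule' (M : Type u) [AddCommGroup M] [Module k M] [Module k[G] M]
    [IsScalarTower k k[G] M] [Module.Finite k M] [IsSimpleModule k[G] M] :
    Simple (FDRep.of (ofModule' (k := k) (G := G) M)) := by
  let e : asModule (ofModule' (k := k) (G := G) M) ≃ₗ[k[G]] M :=
    { asModuleEquiv (ofModule' (k := k) (G := G) M) with
      map_smul' := fun z x =>
        (asModuleEquiv_map_smul (ofModule' M) z x).trans (asAlgebraHom_ofModule' M z _) }
  have : IsSimpleModule k[G] (asModule (FDRep.of (ofModule' (k := k) (G := G) M)).ρ) := .congr e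
  exact simple_of_isSimpleModule_asModule _

theorem eq_zero_of_forall_simple_asAlgebraHom_eq_zero [Finite G] [NeZero (Nat.card G : k)]
    (z : k[G]) (h : ∀ V : FDRep k G, Simple V → asAlgebraHom V.ρ z = 0) : z = 0 := by
  refine eq_zero_of_forall_isSimpleModule_quotient_smul_eq_zero z fun I hI x => ?_
  -- The simple module `k[G] ⧸ I` need not live in the universe of `FDRep k G`.
  have : Module.Finite k (k[G] ⧸ I) := Module.Finite.trans k[G] _
  have : Small.{u} (k[G] ⧸ I) :=
    small_of_injective (Module.finBasis k (k[G] ⧸ I)).equivFun.injective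
  let e := Shrink.linearEquiv.{u} k[G] (k[G] ⧸ I)
  have : IsSimpleModule k[G] (Shrink.{u} (k[G] ⧸ I)) := .congr e
  have : IsScalarTower k k[G] (Shrink.{u} (k[G] ⧸ I)) :=
    (Shrink.linearEquiv k (k[G] ⧸ I)).isScalarTower k[G]
  have : Module.Finite k (Shrink.{u} (k[G] ⧸ I)) := .equiv (Shrink.linearEquiv k _).symm
  have z_acts_zero := h _ (simple_of_ofModule' (Shrink.{u} (k[G] ⧸ I)))
  rw [FDRep.of_ρ'] at z_acts_zero
  apply e.symm.injective
  rw [map_smul, map_zero, ← asAlgebraHom_ofModule', z_acts_zero, LinearMap.zero_apply]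

end GroupAlgebra

section Schur

theorem commute_sum_smul_of_conj_invariant {R G M : Type*} [CommSemiring R] [Group G] [Fintype G]
    [AddCommMonoid M] [Module R M] (ρ : Representation R G M) (f : G → R)
    (hf : ∀ g h, f (h * g * h⁻¹) = f g) (h : G) : Commute (∑ g, f g • ρ g) (ρ h) := by
  rw [Commute, SemiconjBy, Finset.sum_mul, Finset.mul_sum,
    ← Equiv.sum_comp (MulAut.conj h).toEquiv fun g => f g • ρ g * ρ h]
  refine Finset.sum_congr rfl fun g _ => ?_
  simp only [MulEquiv.toEquiv_eq_coe, MulEquiv.coe_toEquiv, MulAut.conj_apply, hf,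
    smul_mul_assoc, mul_smul_comm, ← map_mul, inv_mul_cancel_right]

theorem commute_sum_map_conj {G A : Type*} [Group G] [Fintype G] [Semiring A] (ρ : G →* A)
    (b h : G) : Commute (∑ a, ρ (a * b * a⁻¹)) (ρ h) := by
  rw [Commute, SemiconjBy, Finset.sum_mul, Finset.mul_sum,
    ← Equiv.sum_comp (Equiv.mulLeft h) fun a => ρ (a * b * a⁻¹) * ρ h]
  refine Finset.sum_congr rfl fun a _ => ?_
  simp only [Equiv.coe_mulLeft, ← map_mul, mul_inv_rev, mul_assoc, inv_mul_cancel, mul_one]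

variable {k : Type u} [Field k] {G : Type v}

theorem char_inv_conj [Group G] (V : FDRep k G) (g h : G) :
    V.character (h * g * h⁻¹)⁻¹ = V.character g⁻¹ := by
  rw [conj_inv, FDRep.char_conj]

variable [IsAlgClosed k]

theorem exists_eq_smul_one_of_commute [Monoid G] (V : FDRep k G) [Simple V] (T : End k V)
    (hT : ∀ g, Commute T (V.ρ g)) : ∃ c : k, T = c • 1 := by
  let f : V ⟶ V := FDRep.forget₂HomLinearEquiv V V (Rep.ofHom ⟨T, hT⟩)
  obtain ⟨c, hc⟩ := (finrank_eq_one_iff_of_nonzero' (𝟙 V) (id_nonzero V)).mp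
    (finrank_endomorphism_simple_eq_one k V) f
  exact ⟨c, congr(($hc.symm).hom.hom.hom)⟩

variable [Group G] [NeZero (Nat.card G : k)]

open scoped Classical in
theorem sum_char_mul_char_inv [Fintype G] (V W : FDRep k G) [Simple V] [Simple W] :
    ∑ g, V.character g * W.character g⁻¹ =
      if Nonempty (V ≅ W) then (Nat.card G : k) else 0 := by
  have := invertibleOfNonzero (NeZero.ne (Nat.card G : k))
  have h := FDRep.char_orthonormal V W
  rwa [inv_mul_eq_iff_eq_mul₀ (NeZero.ne _), mul_ite, mul_one, mul_zero] at h

theorem sum_char_mul_char_inv_self [Fintype G] (V : FDRep k G) [Simple V] :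
    ∑ g, V.character g * V.character g⁻¹ = (Nat.card G : k) := by
  classical
  exact (sum_char_mul_char_inv V V).trans (if_pos ⟨Iso.refl V⟩)

theorem finrank_cast_ne_zero_of_simple [Finite G] (V : FDRep k G) [Simple V] :
    (finrank k V : k) ≠ 0 := by
  have := Fintype.ofFinite G
  obtain ⟨c, hc⟩ := exists_eq_smul_one_of_commute V (∑ g, V.character g⁻¹ • V.ρ g)
    (commute_sum_smul_of_conj_invariant V.ρ _ (char_inv_conj V))
  have trace_eq : c * finrank k V = Nat.card G := by
    rw [← sum_char_mul_char_inv_self V, ← smul_eq_mul, ← LinearMap.trace_one, ← map_smul,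
      ← hc, map_sum]
    simp only [map_smul, smul_eq_mul, FDRep.character, mul_comm]
  exact right_ne_zero_of_mul (trace_eq.trans_ne (NeZero.ne _))

theorem eq_trace_div_finrank_smul_one_of_commute [Finite G] (V : FDRep k G) [Simple V]
    (T : End k V) (hT : ∀ g, Commute T (V.ρ g)) :
    T = (LinearMap.trace k V T / finrank k V) • 1 := by
  obtain ⟨c, rfl⟩ := exists_eq_smul_one_of_commute V T hT
  rw [map_smul, LinearMap.trace_one, smul_eq_mul,
    mul_div_cancel_right₀ _ (finrank_cast_ne_zero_of_simple V)]

theorem sum_smul_eq_smul_one_of_conj_invariant [Fintype G] (V : FDRep k G) [Simple V]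
    (f : G → k) (hf : ∀ g h, f (h * g * h⁻¹) = f g) :
    ∑ g, f g • V.ρ g = ((∑ g, V.character g * f g) / finrank k V) • 1 := by
  rw [eq_trace_div_finrank_smul_one_of_commute V _ (commute_sum_smul_of_conj_invariant V.ρ f hf),
    map_sum]
  simp only [map_smul, smul_eq_mul, FDRep.character, mul_comm]

theorem sum_map_conj_eq_smul_one [Fintype G] (V : FDRep k G) [Simple V] (b : G) :
    ∑ a, V.ρ (a * b * a⁻¹) = (Nat.card G * V.character b / finrank k V) • 1 := by
  have trace_eq : LinearMap.trace k V (∑ a, V.ρ (a * b * a⁻¹)) = Nat.card G * V.character b :=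
    calc LinearMap.trace k V (∑ a, V.ρ (a * b * a⁻¹))
      _ = ∑ a, V.character (a * b * a⁻¹) := map_sum _ _ _
      _ = Nat.card G * V.character b := by
        simp only [FDRep.char_conj, Finset.sum_const, Finset.card_univ, nsmul_eq_mul,
          Nat.card_eq_fintype_card]
  rw [← trace_eq]
  exact eq_trace_div_finrank_smul_one_of_commute V _ (commute_sum_map_conj V.ρ b)

end Schur

section Frobenius

variable {k : Type u} [Field k] {G : Type v} [Group G] [Fintype G]

/-- The element `∑ ⁅a, b⁆`, over all `a b : G`, of the group algebra; the coefficients of its powers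
count the ways to write an element of `G` as a product of commutators. -/
noncomputable def commutatorSum (R G : Type*) [Semiring R] [Group G] [Fintype G] : R[G] :=
  ∑ p : G × G, MonoidAlgebra.single ⁅p.1, p.2⁆ 1

/-- The element `(dim V / |G|) ∑ χ_V(g⁻¹) g` of the group algebra. When `V` is simple and `|G|` is
nonzero in `k`, it is the central idempotent that projects onto the `V`-isotypic part. -/
noncomputable def characterIdempotent (V : FDRep k G) : k[G] :=
  ((finrank k V : k) / Nat.card G) • ∑ g, MonoidAlgebra.single g (V.character g⁻¹)

theorem coeff_characterIdempotent (V : FDRep k G) (x : G) :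
    (characterIdempotent V).coeff x = finrank k V / Nat.card G * V.character x⁻¹ := by
  classical
  simp [characterIdempotent, MonoidAlgebra.coeff_sum, Finsupp.single_apply]

variable [IsAlgClosed k] [NeZero (Nat.card G : k)]

theorem asAlgebraHom_commutatorSum (V : FDRep k G) [Simple V] :
    asAlgebraHom V.ρ (commutatorSum k G) = ((Nat.card G / finrank k V : k) ^ 2) • 1 := by
  have sum_left (b : G) : ∑ a : G, V.ρ ⁅a, b⁆ =
      (Nat.card G / finrank k V : k) • (V.character b • V.ρ b⁻¹) := by
    simp only [commutatorElement_def, map_mul V.ρ (_ * _ * _) b⁻¹]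
    rw [← Finset.sum_mul, sum_map_conj_eq_smul_one, smul_one_mul, smul_smul, mul_div_right_comm]
  have sum_right : ∑ b : G, V.character b • V.ρ b⁻¹ = (Nat.card G / finrank k V : k) • 1 := by
    rw [← sum_char_mul_char_inv_self V,
      ← sum_smul_eq_smul_one_of_conj_invariant V _ (char_inv_conj V),
      ← Equiv.sum_comp (Equiv.inv G)]
    simp only [Equiv.inv_apply, inv_inv]
  simp only [commutatorSum, map_sum, asAlgebraHom_single, one_smul, Fintype.sum_prod_type_right,
    sum_left]
  rw [← Finset.smul_sum, sum_right, smul_smul, pow_two]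

open scoped Classical in
theorem asAlgebraHom_characterIdempotent (V W : FDRep k G) [Simple V] [Simple W] :
    asAlgebraHom W.ρ (characterIdempotent V) = if Nonempty (W ≅ V) then 1 else 0 := by
  simp only [characterIdempotent, map_smul, map_sum, asAlgebraHom_single]
  rw [sum_smul_eq_smul_one_of_conj_invariant W _ (char_inv_conj V), sum_char_mul_char_inv]
  split_ifs with h
  · obtain ⟨e⟩ := h
    have finrank_eq : (finrank k V : k) = finrank k W := by
      rw [← FDRep.char_one, ← FDRep.char_one, FDRep.char_iso e]
    rw [finrank_eq, smul_smul, div_mul_div_cancel₀ (NeZero.ne _),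
      div_self (finrank_cast_ne_zero_of_simple W), one_smul]
  · rw [zero_div, zero_smul, smul_zero]

/-- The family `W` contains every simple object exactly once up to isomorphism. In `FDRep k G`
such a family is a set of representatives for the irreducible representations of `G`. -/
structure IsSimpleTransversal {C ι : Type*} [Category* C] [Limits.HasZeroMorphisms C]
    (W : ι → C) : Prop where
  simple (i : ι) : Simple (W i)
  eq_of_iso (i j : ι) : Nonempty (W i ≅ W j) → i = j
  exists_iso (V : C) : Simple V → ∃ i, Nonempty (V ≅ W i)

variable {ι : Type*} [Fintype ι] {W : ι → FDRep k G}

theorem IsSimpleTransversal.eq_sum_smul_characterIdempotent (hW : IsSimpleTransversal W)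
    (z : k[G]) (c : ι → k) (hz : ∀ i, asAlgebraHom (W i).ρ z = c i • 1) :
    z = ∑ i, c i • characterIdempotent (W i) := by
  classical
  have := hW.simple
  have iso_iff (i j : ι) : Nonempty (W i ≅ W j) ↔ i = j :=
    ⟨hW.eq_of_iso i j, fun h => h ▸ ⟨Iso.refl _⟩⟩
  refine sub_eq_zero.mp (eq_zero_of_forall_simple_asAlgebraHom_eq_zero _ fun V hV => ?_)
  obtain ⟨j, ⟨e⟩⟩ := hW.exists_iso V hV
  rw [asAlgebraHom_eq_conj_of_iso e.symm]
  simp only [map_sub, map_sum, map_smul, hz, asAlgebraHom_characterIdempotent, iso_iff, smul_ite,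
    smul_zero, Finset.sum_ite_eq, Finset.mem_univ, if_true, sub_self, map_zero]

end Frobenius

theorem IsSimpleTransversal.card_prod_commutators_eq {k : Type u} [Field k] [IsAlgClosed k]
    {G : Type v} [Group G] [Finite G] [NeZero (Nat.card G : k)] {ι : Type*} [Fintype ι]
    {W : ι → FDRep k G} (hW : IsSimpleTransversal W) (γ : ℕ) (x : G) :
    (Nat.card {t : Fin γ → G × G // (List.ofFn fun j => ⁅(t j).1, (t j).2⁆).prod = x} : k) =
      ∑ i, (Nat.card G / finrank k (W i) : k) ^ (2 * γ) *
        (finrank k (W i) / Nat.card G * (W i).character x⁻¹) := by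
  have := Fintype.ofFinite G
  have := hW.simple
  have expansion := hW.eq_sum_smul_characterIdempotent (commutatorSum k G ^ γ)
    (fun i => (Nat.card G / finrank k (W i) : k) ^ (2 * γ)) fun i => by
      rw [map_pow, asAlgebraHom_commutatorSum, smul_pow, one_pow, pow_mul]
  rw [← coeff_sum_single_pow (fun p : G × G => ⁅p.1, p.2⁆) γ x, ← commutatorSum, expansion,
    MonoidAlgebra.coeff_sum, Finsupp.finsetSum_apply]
  simp only [MonoidAlgebra.coeff_smul, Finsupp.smul_apply, smul_eq_mul, coeff_characterIdempotent]

theorem card_product_commutators_eq_one_general {k : Type u} [Field k] [IsAlgClosed k] [CharZero k]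
    {G : Type v} [Group G] [Finite G] {ι : Type*} [Fintype ι] {W : ι → FDRep k G}
    (hW : IsSimpleTransversal W) (γ : ℕ) :
    (Nat.card {t : Fin γ → G × G // (List.ofFn fun j => ⁅(t j).1, (t j).2⁆).prod = 1} : ℚ) =
      (Nat.card G : ℚ) ^ (2 * γ - 1 : ℤ) *
        ∑ i, (finrank k (W i) : ℚ) ^ (2 - 2 * γ : ℤ) := by
  have := hW.simple
  apply Rat.cast_injective (α := k)
  push_cast
  rw [hW.card_prod_commutators_eq, Finset.mul_sum]
  refine Finset.sum_congr rfl fun i _ => ?_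
  have hd := finrank_cast_ne_zero_of_simple (W i)
  have hG : (Nat.card G : k) ≠ 0 := NeZero.ne _
  rw [inv_one, FDRep.char_one, ← zpow_natCast, Nat.cast_mul, Nat.cast_two, div_zpow, zpow_sub₀ hG,
    zpow_sub₀ hd]
  field_simp

theorem card_product_commutators_eq_one
    (G : Type) [Group G] [Fintype G]
    (ι : Type*) [Fintype ι] (W : ι → FDRep ℂ G)
    (hsimple : ∀ i, CategoryTheory.Simple (W i))
    (hdist : ∀ i j, Nonempty (W i ≅ W j) → i = j)
    (hall : ∀ V : FDRep ℂ G, CategoryTheory.Simple V → ∃ i, Nonempty (V ≅ W i))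
    (γ : ℕ) (hγ : 1 ≤ γ) :
    (Nat.card {t : Fin γ → G × G //
        (List.ofFn (fun j => (t j).1 * (t j).2 * ((t j).1)⁻¹ * ((t j).2)⁻¹)).prod = 1} : ℚ) =
      (Fintype.card G : ℚ) ^ (2 * γ - 1) *
        ∑ i, (Module.finrank ℂ (W i) : ℚ) ^ ((2 : ℤ) - 2 * γ) := by
  rw [← zpow_natCast, show ((2 * γ - 1 : ℕ) : ℤ) = 2 * γ - 1 by lia, ← Nat.card_eq_fintype_card]
  exact card_product_commutators_eq_one_general ⟨hsimple, hdist, hall⟩ γ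
end

section
/- Let G be a finite group. The number of pairs (a,b) ∈ G² with aba⁻¹b⁻¹ = g equals |G| ∑_{ρ ∈ Irr(G)} χ_ρ(g)/dim ρ, for any g ∈ G. -/
/-!
The number `N g` of pairs with commutator `g` is a class function of `g`, so it is a combination of
irreducible characters. For an irreducible `ρ` of degree `d` with character `χ`, the operator
`∑ b, ρ (b * a * b⁻¹)` commutes with `ρ`, hence is a scalar by Schur's lemma; comparing traces gives
`d * ∑ b, χ (b * a * b⁻¹ * a⁻¹) = |G| * χ a * χ a⁻¹`. Summing over `a` and using the orthogonality
of characters, the coefficient `∑ x, N x * χ x⁻¹` is `|G| ^ 2 / d`. That the irreducible characters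
span the class functions follows from the semisimplicity of `k[G]`: a class function orthogonal to
all of them defines an element of `k[G]` killing every simple module.
-/

open CategoryTheory Module
open scoped MonoidAlgebra commutatorElement

universe u v

section Averaging

variable {k G V : Type*} [CommSemiring k] [Group G] [Fintype G] [AddCommMonoid V] [Module k V]
  (ρ : Representation k G V)

theorem commute_sum_conj (a g : G) : Commute (∑ b, ρ (b * a * b⁻¹)) (ρ g) := by
  rw [Commute, SemiconjBy, Finset.sum_mul, Finset.mul_sum]
  refine (Fintype.sum_equiv (Equiv.mulLeft g) _ _ fun b ↦ ?_).symm
  simp [← map_mul, mul_assoc]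

theorem commute_sum_smul_apply_inv {f : G → k} (hf : ∀ g x, f (g * x * g⁻¹) = f x) (g : G) :
    Commute (∑ x, f x • ρ x⁻¹) (ρ g) := by
  rw [Commute, SemiconjBy, Finset.sum_mul, Finset.mul_sum]
  refine (Fintype.sum_equiv (MulAut.conj g).toEquiv _ _ fun x ↦ ?_).symm
  rw [show (MulAut.conj g).toEquiv x = g * x * g⁻¹ from rfl, hf]
  simp [← map_mul, mul_assoc]

end Averaging

section Schur

variable {k G V : Type*} [Field k] [IsAlgClosed k] [Monoid G] [AddCommGroup V] [Module k V]
  [FiniteDimensional k V] (ρ : Representation k G V) [ρ.IsIrreducible]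

theorem exists_eq_smul_one_of_forall_commute {T : End k V} (hT : ∀ g, Commute T (ρ g)) :
    ∃ c : k, T = c • 1 := by
  obtain ⟨c, hc⟩ :=
    Representation.IsIrreducible.algebraMap_intertwiningMap_bijective_of_isAlgClosed.2
      (⟨T, hT⟩ : ρ.IntertwiningMap ρ)
  exact ⟨c, congr(($hc).toLinearMap).symm⟩

theorem finrank_mul_trace_mul_of_forall_commute {T : End k V} (hT : ∀ g, Commute T (ρ g))
    (S : End k V) :
    (finrank k V : k) * LinearMap.trace k V (T * S) =
      LinearMap.trace k V T * LinearMap.trace k V S := by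
  obtain ⟨c, rfl⟩ := exists_eq_smul_one_of_forall_commute ρ hT
  simp only [smul_one_mul, map_smul, LinearMap.trace_one, smul_eq_mul]
  ring

end Schur

section IrreducibleCharacter

variable {k G V : Type*} [Field k] [IsAlgClosed k] [Group G] [Fintype G] [AddCommGroup V]
  [Module k V] [FiniteDimensional k V] (ρ : Representation k G V) [ρ.IsIrreducible]

theorem finrank_mul_sum_character_conj_mul (a g : G) :
    (finrank k V : k) * ∑ b, ρ.character (b * a * b⁻¹ * g) =
      Nat.card G * (ρ.character a * ρ.character g) := by
  have htrace : LinearMap.trace k V (∑ b, ρ (b * a * b⁻¹)) = Nat.card G * ρ.character a := by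
    calc LinearMap.trace k V (∑ b, ρ (b * a * b⁻¹))
        = ∑ b, ρ.character (b * a * b⁻¹) := map_sum ..
      _ = Nat.card G * ρ.character a := by
        simp only [Representation.char_conj, Finset.sum_const, Finset.card_univ, nsmul_eq_mul,
          Nat.card_eq_fintype_card]
  calc (finrank k V : k) * ∑ b, ρ.character (b * a * b⁻¹ * g)
      = finrank k V * LinearMap.trace k V ((∑ b, ρ (b * a * b⁻¹)) * ρ g) := by
        simp only [Representation.character, map_mul, Finset.sum_mul, map_sum]
    _ = LinearMap.trace k V (∑ b, ρ (b * a * b⁻¹)) * ρ.character g :=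
        finrank_mul_trace_mul_of_forall_commute ρ (commute_sum_conj ρ a) _
    _ = Nat.card G * (ρ.character a * ρ.character g) := by rw [htrace, mul_assoc]

variable [NeZero (Nat.card G : k)]

theorem sum_character_mul_character_inv :
    ∑ a, ρ.character a * ρ.character a⁻¹ = Nat.card G := by
  have := invertibleOfNonzero (NeZero.ne (Nat.card G : k))
  have h := Representation.char_orthonormal ρ ρ
  rwa [if_pos ⟨.refl ρ⟩, inv_mul_eq_iff_eq_mul₀ (NeZero.ne _), mul_one] at h

theorem finrank_mul_sum_character_commutator_inv :
    (finrank k V : k) * ∑ p : G × G, ρ.character ⁅p.1, p.2⁆⁻¹ = (Nat.card G : k) ^ 2 := by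
  calc (finrank k V : k) * ∑ p : G × G, ρ.character ⁅p.1, p.2⁆⁻¹
      = ∑ a, finrank k V * ∑ b, ρ.character (b * a * b⁻¹ * a⁻¹) := by
        simp only [Fintype.sum_prod_type, Finset.mul_sum, commutatorElement_inv]
        rfl
    _ = Nat.card G * ∑ a, ρ.character a * ρ.character a⁻¹ := by
        simp only [finrank_mul_sum_character_conj_mul, ← Finset.mul_sum]
    _ = (Nat.card G : k) ^ 2 := by
        rw [sum_character_mul_character_inv, sq]

omit [Fintype G] in
include ρ in
theorem finrank_cast_ne_zero_of_isIrreducible [Finite G] : (finrank k V : k) ≠ 0 := by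
  have := Fintype.ofFinite G
  refine left_ne_zero_of_mul (b := ∑ p : G × G, ρ.character ⁅p.1, p.2⁆⁻¹) ?_
  rw [finrank_mul_sum_character_commutator_inv]
  exact pow_ne_zero 2 (NeZero.ne _)

theorem sum_character_commutator_inv :
    ∑ p : G × G, ρ.character ⁅p.1, p.2⁆⁻¹ = (Nat.card G : k) ^ 2 / finrank k V :=
  eq_div_of_mul_eq (finrank_cast_ne_zero_of_isIrreducible ρ)
    (by rw [mul_comm, finrank_mul_sum_character_commutator_inv])

theorem sum_smul_apply_inv_eq_zero {f : G → k} (hf : ∀ g x, f (g * x * g⁻¹) = f x)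
    (h : ∑ x, f x * ρ.character x⁻¹ = 0) : ∑ x, f x • ρ x⁻¹ = 0 := by
  obtain ⟨c, hc⟩ := exists_eq_smul_one_of_forall_commute ρ (commute_sum_smul_apply_inv ρ hf)
  have htrace : c * finrank k V = 0 := by
    have := congr(LinearMap.trace k V $hc)
    simp only [map_sum, map_smul, LinearMap.trace_one, smul_eq_mul] at this
    exact this.symm.trans h
  rw [hc, (mul_eq_zero_iff_right (finrank_cast_ne_zero_of_isIrreducible ρ)).mp htrace, zero_smul]

end IrreducibleCharacter

section Simple

variable {k : Type u} {G : Type v} [Field k] [Monoid G] (V : FDRep k G)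

theorem isIrreducible_of_simple [Simple V] : Representation.IsIrreducible V.ρ where
  exists_pair_ne := by
    refine ⟨⊥, ⊤, fun h ↦ id_nonzero V ?_⟩
    ext x
    have hx : x ∈ (⊥ : Subrepresentation V.ρ) := h ▸ Submodule.mem_top
    exact hx
  eq_bot_or_eq_top N := by
    let i : FDRep.of N.toRepresentation ⟶ V :=
      FDRep.forget₂HomLinearEquiv _ _ (Rep.ofHom ⟨N.toSubmodule.subtype, fun _ ↦ rfl⟩)
    have : Mono i := ConcreteCategory.mono_of_injective _ Subtype.val_injective
    by_cases hi : i = 0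
    · refine .inl (eq_bot_iff.mpr fun x hx ↦ ?_)
      exact congr($hi ⟨x, hx⟩)
    · have := isIso_of_mono_of_nonzero hi
      refine .inr (eq_top_iff.mpr fun x _ ↦ ?_)
      obtain ⟨y, rfl⟩ := (ConcreteCategory.bijective_of_isIso i).surjective x
      exact y.2

theorem simple_of_isIrreducible (h : Representation.IsIrreducible V.ρ) : Simple V := by
  let F := forget₂ (FDRep k G) (Rep k G) ⋙ Rep.toModuleMonoidAlgebra
  have : Simple (F.obj V) := (simple_iff_isSimpleModule' _).mpr
    ((Representation.irreducible_iff_isSimpleModule_asModule (V := V) V.ρ).mp h)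
  exact Functor.simple_of_simple_obj F V

end Simple

section OfModule

variable {k G M : Type*}

theorem ofModule'_asAlgebraHom_apply_apply [CommSemiring k] [Monoid G] [AddCommMonoid M]
    [Module k M] [Module k[G] M] [IsScalarTower k k[G] M] (r : k[G]) (m : M) :
    (Representation.ofModule' M).asAlgebraHom r m = r • m :=
  congr($((MonoidAlgebra.lift k _ G).apply_symm_apply (Algebra.lsmul k k M)) r m)

variable (k G M) in
theorem isIrreducible_ofModule' [Field k] [Monoid G] [AddCommGroup M] [Module k M]
    [Module k[G] M] [IsScalarTower k k[G] M] [IsSimpleModule k[G] M] :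
    (Representation.ofModule' M : Representation k G M).IsIrreducible := by
  rw [Representation.irreducible_iff_isSimpleModule_asModule]
  let e : (Representation.ofModule' M : Representation k G M).asModule ≃ₗ[k[G]] M :=
    { AddEquiv.refl M with map_smul' := ofModule'_asAlgebraHom_apply_apply (M := M) }
  exact IsSimpleModule.congr e

end OfModule

theorem eq_zero_of_forall_asAlgebraHom_eq_zero {k G : Type u} [Field k] [Group G] [Finite G]
    [NeZero (Nat.card G : k)] {e : k[G]}
    (h : ∀ (V : FDRep k G) [Simple V], Representation.asAlgebraHom V.ρ e = 0) : e = 0 := by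
  suffices e ∈ Ring.jacobson k[G] by
    rwa [IsSemisimpleRing.jacobson_eq_bot] at this
  refine Submodule.mem_sInf.mpr fun m (hm : IsCoatom m) ↦ ?_
  have : IsSimpleModule k[G] (k[G] ⧸ m) := isSimpleModule_iff_isCoatom.mpr hm
  have : FiniteDimensional k (k[G] ⧸ m) := Module.Finite.trans k[G] _
  let V : FDRep k G := FDRep.of (Representation.ofModule' (k[G] ⧸ m))
  have : Simple V := simple_of_isIrreducible V (isIrreducible_ofModule' ..)
  have hsmul : e • (Submodule.Quotient.mk 1 : k[G] ⧸ m) = 0 :=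
    calc e • (Submodule.Quotient.mk 1 : k[G] ⧸ m)
        = Representation.asAlgebraHom V.ρ e (Submodule.Quotient.mk 1) :=
          (ofModule'_asAlgebraHom_apply_apply ..).symm
      _ = 0 := LinearMap.congr_fun (h V) _
  rwa [← Submodule.Quotient.mk_smul, Submodule.Quotient.mk_eq_zero, smul_eq_mul, mul_one] at hsmul

section ClassFunction

variable {k G : Type u} [Field k] [IsAlgClosed k] [Group G] [Fintype G] [NeZero (Nat.card G : k)]

theorem eq_zero_of_forall_sum_mul_character_inv_eq_zero {f : G → k}
    (hf : ∀ g x, f (g * x * g⁻¹) = f x)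
    (h : ∀ (V : FDRep k G) [Simple V], ∑ x, f x * V.character x⁻¹ = 0) : f = 0 := by
  classical
  have he : ∑ x, MonoidAlgebra.single x⁻¹ (f x) = 0 :=
    eq_zero_of_forall_asAlgebraHom_eq_zero fun V _ ↦ by
      have := isIrreducible_of_simple V
      simpa only [map_sum, Representation.asAlgebraHom_single] using
        sum_smul_apply_inv_eq_zero V.ρ hf (h V)
  ext g
  simpa [MonoidAlgebra.coeff_sum, Finsupp.single_apply] using congr(($he).coeff g⁻¹)

theorem sum_character_mul_character_inv_eq_ite {ι : Type*} [DecidableEq ι] {W : ι → FDRep k G}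
    (hsimple : ∀ i, Simple (W i)) (hdist : ∀ i j, Nonempty (W i ≅ W j) → i = j) (i j : ι) :
    ∑ x, (W i).character x * (W j).character x⁻¹ = if i = j then (Nat.card G : k) else 0 := by
  have := invertibleOfNonzero (NeZero.ne (Nat.card G : k))
  have hiso : Nonempty (W i ≅ W j) ↔ i = j := ⟨hdist i j, fun h ↦ h ▸ ⟨Iso.refl _⟩⟩
  have horth := FDRep.char_orthonormal (W i) (W j)
  rw [inv_mul_eq_iff_eq_mul₀ (NeZero.ne _)] at horth
  simpa only [hiso, mul_ite, mul_one, mul_zero] using horth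

theorem card_mul_apply_eq_sum_mul_character {ι : Type*} [Fintype ι] {W : ι → FDRep k G}
    (hsimple : ∀ i, Simple (W i)) (hdist : ∀ i j, Nonempty (W i ≅ W j) → i = j)
    (hall : ∀ V : FDRep k G, Simple V → ∃ i, Nonempty (V ≅ W i)) {f : G → k}
    (hf : ∀ g x, f (g * x * g⁻¹) = f x) (g : G) :
    Nat.card G * f g = ∑ i, (∑ x, f x * (W i).character x⁻¹) * (W i).character g := by
  classical
  let c (i : ι) : k := ∑ x, f x * (W i).character x⁻¹
  let r (x : G) : k := Nat.card G * f x - ∑ i, c i * (W i).character x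
  have hr (g x : G) : r (g * x * g⁻¹) = r x := by
    simp only [r, hf, FDRep.char_conj]
  have hr_orth (j : ι) : ∑ x, r x * (W j).character x⁻¹ = 0 := by
    calc ∑ x, r x * (W j).character x⁻¹
        = Nat.card G * c j - ∑ i, c i * ∑ x, (W i).character x * (W j).character x⁻¹ := by
          simp only [r, sub_mul, Finset.sum_sub_distrib, Finset.sum_mul, mul_assoc]
          rw [Finset.sum_comm]
          simp only [c, Finset.mul_sum]
      _ = Nat.card G * c j - c j * Nat.card G := by
          simp only [sum_character_mul_character_inv_eq_ite hsimple hdist, mul_ite, mul_zero,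
            Finset.sum_ite_eq', Finset.mem_univ, if_true]
      _ = 0 := by rw [mul_comm, sub_self]
  have hr_zero : r = 0 := eq_zero_of_forall_sum_mul_character_inv_eq_zero hr fun V hV ↦ by
    obtain ⟨j, ⟨e⟩⟩ := hall V hV
    rw [FDRep.char_iso e, hr_orth]
  exact sub_eq_zero.mp congr($hr_zero g)

end ClassFunction

section CommutatorCount

variable {G : Type*} [Group G]

/-- The number of pairs of elements of `G` with commutator `g`, as a function of `g`; it takes the
junk value `0` when there are infinitely many. -/
noncomputable def commutatorCount (g : G) : ℕ :=
  Nat.card {p : G × G // ⁅p.1, p.2⁆ = g}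

theorem commutatorCount_conj (g x : G) :
    commutatorCount (g * x * g⁻¹) = commutatorCount x := by
  let c := MulAut.conj g
  refine (Nat.card_congr ((c.toEquiv.prodCongr c.toEquiv).subtypeEquiv fun p ↦ ?_)).symm
  change _ ↔ ⁅c p.1, c p.2⁆ = c x
  rw [← map_commutatorElement, c.apply_eq_iff_eq]

theorem sum_commutatorCount_mul [Fintype G] {R : Type*} [Semiring R] (φ : G → R) :
    ∑ x, commutatorCount x * φ x = ∑ p : G × G, φ ⁅p.1, p.2⁆ := by
  classical
  rw [← Finset.sum_fiberwise' _ (fun p : G × G ↦ ⁅p.1, p.2⁆) φ]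
  simp only [Finset.sum_const, nsmul_eq_mul, commutatorCount, Nat.card_eq_fintype_card,
    Fintype.card_subtype]

end CommutatorCount

theorem frobenius_commutator_count_general {k G : Type u} [Field k] [IsAlgClosed k] [Group G]
    [Finite G] [NeZero (Nat.card G : k)] {ι : Type*} [Fintype ι] {W : ι → FDRep k G}
    (hsimple : ∀ i, Simple (W i)) (hdist : ∀ i j, Nonempty (W i ≅ W j) → i = j)
    (hall : ∀ V : FDRep k G, Simple V → ∃ i, Nonempty (V ≅ W i)) (g : G) :
    (Nat.card {p : G × G // p.1 * p.2 * p.1⁻¹ * p.2⁻¹ = g} : k) =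
      Nat.card G * ∑ i, (W i).character g / finrank k (W i) := by
  have := Fintype.ofFinite G
  let N (x : G) : k := commutatorCount x
  have hN (g x : G) : N (g * x * g⁻¹) = N x := congr(($(commutatorCount_conj g x) : k))
  have hcoeff (i : ι) :
      ∑ x, N x * (W i).character x⁻¹ = (Nat.card G : k) ^ 2 / finrank k (W i) := by
    have := isIrreducible_of_simple (W i)
    exact (sum_commutatorCount_mul _).trans (sum_character_commutator_inv (W i).ρ)
  refine mul_left_cancel₀ (NeZero.ne (Nat.card G : k)) ?_
  calc (Nat.card G : k) * N g
      = ∑ i, (∑ x, N x * (W i).character x⁻¹) * (W i).character g :=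
        card_mul_apply_eq_sum_mul_character hsimple hdist hall hN g
    _ = Nat.card G * (Nat.card G * ∑ i, (W i).character g / finrank k (W i)) := by
        simp only [hcoeff, Finset.mul_sum]
        exact Fintype.sum_congr _ _ fun i ↦ by ring

theorem frobenius_commutator_count
    (G : Type) [Group G] [Fintype G]
    (ι : Type*) [Fintype ι] (W : ι → FDRep ℂ G)
    (hsimple : ∀ i, CategoryTheory.Simple (W i))
    (hdist : ∀ i j, Nonempty (W i ≅ W j) → i = j)
    (hall : ∀ V : FDRep ℂ G, CategoryTheory.Simple V → ∃ i, Nonempty (V ≅ W i))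
    (g : G) :
    (Nat.card {p : G × G // p.1 * p.2 * p.1⁻¹ * p.2⁻¹ = g} : ℂ) =
      (Fintype.card G : ℂ) *
        ∑ i, (W i).character g / (Module.finrank ℂ (W i) : ℂ) := by
  rw [frobenius_commutator_count_general hsimple hdist hall, Nat.card_eq_fintype_card]
end
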